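/- arXiv:2309.08518 — 2 statements merged into one kernel-verified Lean document; each statement's English description precedes it below -/
import Mathlib

section
/- Let A be an alphabet and let T₁ and T₂ be colored immaculate tableaux of the same shape J and the same type B. Then T₁ = T₂ if and only if std(T₁) = std(T₂). -/
open scoped BigOperators

namespace ColoredImm

variable {A : Type*}

/-- A *weak sentence* over the alphabet `A`: a finite list of words (words may be empty). -/
abbrev Sentence (A : Type*) := List (List A)

/-- A genuine *sentence*: all of its words are nonempty. -/
def IsSentence (I : Sentence A) : Prop := ∀ w ∈ I, w ≠ []

/-- The size `|I|` of a sentence: its total number of letters. -/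
def size (I : Sentence A) : ℕ := (I.map List.length).sum

/-- The word lengths `wℓ(I)` of a sentence. -/
def wl (I : Sentence A) : List ℕ := I.map List.length

/-- The flattening of a weak sentence: delete all empty words. -/
def flattenWS (I : Sentence A) : Sentence A := I.filter (fun w => !w.isEmpty)

/-- `Refines J I` means `J ⪯ I`: the sentence `I` can be obtained by concatenating
some adjacent words of `J` (so `J` is a refinement of `I`, and `I` a coarsening of `J`). -/
def Refines (J I : Sentence A) : Prop :=
  ∃ P : List (Sentence A), (∀ p ∈ P, p ≠ []) ∧ P.flatten = J ∧ P.map List.flatten = I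

/-! ### Fillings and colored immaculate tableaux -/

/-- An integer filling of a diagram, recorded row by row. -/
abbrev Filling := List (List ℕ)

/-- The entry of a filling at box `b = (row, column)` (0-indexed), with default `0`. -/
def entryAt (f : Filling) (b : ℕ × ℕ) : ℕ := (f.getD b.1 []).getD b.2 0

/-- `IsCIT I f`: `f` is a colored immaculate tableau of shape `I`; that is, `f` has the
same shape as the colored composition diagram of `I`, its entries are positive integers
weakly increasing left to right along each row, and the entries in the first column are
strictly increasing from top to bottom. -/
def IsCIT (I : Sentence A) (f : Filling) : Prop :=
  f.map List.length = I.map List.length ∧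
  (∀ row ∈ f, row.Chain' (· ≤ ·)) ∧
  (f.filterMap List.head?).Chain' (· < ·) ∧
  (∀ x ∈ f.flatten, 1 ≤ x)

/-- The colors (letters of `w`) of the boxes of one row whose entry (in `row`) is `v`,
read from left to right. -/
def rowWith (w : List A) (row : List ℕ) (v : ℕ) : List A :=
  ((w.zip row).filter (fun p => p.2 == v)).map Prod.fst

/-- The word of the type of a tableau at value `v`: the colors of all boxes with entry `v`,
read left to right, from the bottom row up to the top row. -/
def typeWord (I : Sentence A) (f : Filling) (v : ℕ) : List A :=
  (((I.zip f).reverse).map (fun p => rowWith p.1 p.2 v)).flatten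

/-- `HasType I f B` : the tableau `f` (of shape `I`) has type the weak sentence `B`,
i.e. for every positive integer `v`, the colors of the boxes of `f` containing `v`
(read left to right, bottom to top) form the `v`-th word of `B`. -/
def HasType (I : Sentence A) (f : Filling) (B : Sentence A) : Prop :=
  ∀ v, 1 ≤ v → typeWord I f v = B.getD (v - 1) []

/-- `K_{J,B}`: the number of colored immaculate tableaux of shape `J` and type `B`. -/
noncomputable def KJB (J B : Sentence A) : ℕ :=
  Set.ncard {f : Filling | IsCIT J f ∧ HasType J f B}

/-! ### Standardization -/

/-- The list of boxes of a filling. -/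
def boxes (f : Filling) : List (ℕ × ℕ) :=
  ((List.range f.length).map
    (fun r => (List.range (f.getD r []).length).map (fun j => (r, j)))).flatten

/-- `beforeB f b b'`: box `b` comes strictly before box `b'` in the type-reading order of `f`
(smaller entries first; among equal entries, lower rows first, and within a row left to right). -/
def beforeB (f : Filling) (b b' : ℕ × ℕ) : Bool :=
  entryAt f b < entryAt f b' ||
    (entryAt f b == entryAt f b' && (b'.1 < b.1 || (b.1 == b'.1 && b.2 < b'.2)))

/-- The standardization of a filling: each box is renumbered (starting from `1`)
according to its position in the type-reading order. -/
def stdFill (f : Filling) : Filling :=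
  (List.range f.length).map (fun r =>
    (List.range (f.getD r []).length).map (fun j =>
      1 + ((boxes f).filter (fun b' => beforeB f b' (r, j))).length))

/-- The number of boxes of a filling. -/
def nBoxes (f : Filling) : ℕ := f.flatten.length

/-- A filling of `n` boxes is standard when its entries are exactly `1, …, n`,
each appearing once. -/
def IsStandardF (f : Filling) : Prop := f.flatten.Perm (List.range' 1 (nBoxes f))

/-! ### Descents and the colored descent composition -/

/-- The (0-indexed) row containing the value `v` in a standard filling. -/
def rowOf (f : Filling) (v : ℕ) : ℕ := f.findIdx (fun row => row.contains v)

/-- The sorted list of descents of a standard filling: those `i` with `1 ≤ i ≤ n-1`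
such that `i+1` lies in a strictly lower row than `i`. -/
def descList (f : Filling) : List ℕ :=
  (List.range' 1 (nBoxes f - 1)).filter (fun i => decide (rowOf f i < rowOf f (i + 1)))

/-- The composition of `n` associated to a set of split positions `d_1 < … < d_k`:
`(d_1, d_2 - d_1, …, n - d_k)`. -/
def compOf (ds : List ℕ) (n : ℕ) : List ℕ :=
  List.zipWith (fun a b => b - a) (0 :: ds) (ds ++ [n])

/-- Split a word into a sentence according to a composition. -/
def splitByComp : List A → List ℕ → List (List A)
  | _, [] => []
  | w, a :: rest => w.take a :: splitByComp (w.drop a) rest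

/-- The color of the box containing the value `v` in a standard filling of shape `I`. -/
def colorOf [Inhabited A] (I : Sentence A) (f : Filling) (v : ℕ) : A :=
  (I.getD (rowOf f v) []).getD ((f.getD (rowOf f v) []).findIdx (fun x => x == v)) default

/-- The maximal word of the colored descent composition of a standard filling of shape `I`:
the colors of its boxes read in the order of their integer entries. -/
def readWord [Inhabited A] (I : Sentence A) (f : Filling) : List A :=
  (List.range (nBoxes f)).map (fun i => colorOf I f (i + 1))

/-- The colored descent composition `co_A(U)` of a standard colored immaculate tableau:
read the colors of the boxes in the order of their entries, starting a new word
immediately after each descent. -/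
def coA [Inhabited A] (I : Sentence A) (f : Filling) : Sentence A :=
  if nBoxes f = 0 then [] else splitByComp (readWord I f) (compOf (descList f) (nBoxes f))

/-- `L_{J,C}`: the number of standard colored immaculate tableaux of shape `J`
with colored descent composition `C`. -/
noncomputable def LJC [Inhabited A] (J C : Sentence A) : ℕ :=
  Set.ncard {f : Filling | IsCIT J f ∧ IsStandardF f ∧ coA J f = C}

/-! ### The colored quasisymmetric functions `QSym_A` -/

/-- A (normal form of a) monomial in the partially commutative variables `x_{a,i}`:
a pair consisting of the list of words `(w_1, …, w_m)` and the list of (strictly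
increasing, positive) second indices `(j_1 < … < j_m)`, representing
`x_{w_1,j_1} ⋯ x_{w_m,j_m}`. -/
abbrev Mono (A : Type*) := List (List A) × List ℕ

/-- A colored quasisymmetric "series": a formal linear combination of monomials,
recorded by its coefficient function.  `QSym_A` itself is the span of the colored
monomial functions `MQ I` inside this space. -/
abbrev QSymA (A : Type*) := Mono A → ℚ

/-- Validity of a monomial normal form: words and indices match up, the indices are
strictly increasing positive integers, and all words are nonempty. -/
def ValidMono (m : Mono A) : Prop :=
  m.1.length = m.2.length ∧ m.2.Chain' (· < ·) ∧ (∀ j ∈ m.2, 1 ≤ j) ∧ ∀ w ∈ m.1, w ≠ []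

open Classical in
/-- The colored monomial quasisymmetric function `M_I`: the sum of all monomials
`x_{w_1,j_1} ⋯ x_{w_m,j_m}` with `j_1 < … < j_m`, where `I = (w_1, …, w_m)`. -/
noncomputable def MQ (I : Sentence A) : QSymA A := fun m =>
  if m.1 = I ∧ ValidMono m then 1 else 0

/-- The largest entry of a filling. -/
def maxEntry (f : Filling) : ℕ := f.flatten.foldr max 0

/-- The monomial `x_T` of a colored immaculate tableau `T = f` of shape `I`:
for `T` of type `B = (u_1, …, u_j)` it is `x_{u_1,1} x_{u_2,2} ⋯ x_{u_j,j}`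
(empty words are skipped). -/
def monoOf (I : Sentence A) (f : Filling) : Mono A :=
  let vs := ((List.range (maxEntry f)).map (· + 1)).filter (fun v => !(typeWord I f v).isEmpty)
  (vs.map (typeWord I f), vs)

/-- The colored dual immaculate function `𝔖*_J = Σ_T x_T`, the sum of the monomials of all
colored immaculate tableaux `T` of shape `J` (its coefficient at a monomial `m` is the
number of such tableaux with `x_T = m`). -/
noncomputable def dualImm (J : Sentence A) : QSymA A := fun m =>
  (Set.ncard {f : Filling | IsCIT J f ∧ monoOf J f = m} : ℚ)

/-- The colored fundamental quasisymmetric function `F_I = Σ_{J ⪯ I} M_J`. -/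
noncomputable def FQ (I : Sentence A) : QSymA A :=
  ∑ᶠ J ∈ {J : Sentence A | Refines J I}, MQ J

/-! ### The colored immaculate descent graph -/

/-- Edges of the colored immaculate descent graph: a directed edge from `I` to `J` (`J ≠ I`)
whenever some standard colored immaculate tableau of shape `I` has colored descent
composition `J`. -/
def IsEdge [Inhabited A] (I J : Sentence A) : Prop := J ≠ I ∧ LJC I J ≠ 0

/-- Directed paths from `I` to `K` in the colored immaculate descent graph, recorded by
their (nonempty) lists of successive vertices; the path `[I]` is the empty path at `I`. -/
def PathsFromTo [Inhabited A] (I K : Sentence A) : Set (List (Sentence A)) :=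
  {p | p.head? = some I ∧ p.getLast? = some K ∧ p.Chain' IsEdge}

/-- The signed weight `(-1)^{ℓ(𝒫)} prod(𝒫)` of a directed path `𝒫`:
`ℓ(𝒫)` is its number of edges and `prod(𝒫)` the product of its edge weights `L_{I,J}`. -/
noncomputable def pathWeight [Inhabited A] (p : List (Sentence A)) : ℚ :=
  ((-1 : ℚ)) ^ (p.length - 1) * ((p.zip p.tail).map (fun e => (LJC e.1 e.2 : ℚ))).prod

/-- `L⁻¹_{I,K} = Σ_𝒫 (-1)^{ℓ(𝒫)} prod(𝒫)`, summed over all directed paths `𝒫`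
from `I` to `K` in the colored immaculate descent graph. -/
noncomputable def Linv [Inhabited A] (I K : Sentence A) : ℚ :=
  ∑ᶠ p ∈ PathsFromTo I K, pathWeight p

/-! ### The colored noncommutative symmetric functions `NSym_A` -/

/-- A formal series over the complete homogeneous basis `{H_I}` of `NSym_A`, recorded by its
coefficient function on (weak) sentences.  `NSym_A` itself consists of the finitely
supported elements supported on genuine sentences; see `InNSym`. -/
abbrev NSymA (A : Type*) := Sentence A → ℚ

/-- Membership in `NSym_A` proper: finitely supported, and supported on genuine sentences. -/
def InNSym (f : NSymA A) : Prop :=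
  (Function.support f).Finite ∧ ∀ I, f I ≠ 0 → IsSentence I

open Classical in
/-- The colored complete homogeneous noncommutative symmetric function
`H_I = H_{w_1} ⋯ H_{w_k}`. -/
noncomputable def Hd (I : Sentence A) : NSymA A := fun J => if J = I then 1 else 0

/-- `H_w` for a single word `w`, with `H_∅ = 1`. -/
noncomputable def Hw (w : List A) : NSymA A := if w.isEmpty then Hd [] else Hd [w]

/-- Multiplication in `NSym_A` (the concatenation product, extended to series):
`H_I · H_J = H_{I ⬝ J}`. -/
def mulN (f g : NSymA A) : NSymA A := fun I =>
  ∑ j ∈ Finset.range (I.length + 1), f (I.take j) * g (I.drop j)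

/-- The duality pairing `⟨·,·⟩ : NSym_A × QSym_A → ℚ`, determined by
`⟨H_I, M_J⟩ = δ_{I,J}`: the `M_I`-coefficient of a quasisymmetric function is its
coefficient on the monomial `x_{w_1,1} x_{w_2,2} ⋯ x_{w_k,k}`. -/
noncomputable def pairNQ (G : NSymA A) (F : QSymA A) : ℚ :=
  ∑ᶠ I ∈ {I : Sentence A | IsSentence I}, G I * F (I, List.range' 1 I.length)

/-- All ways of splitting each word of a list of words into a prefix and a suffix. -/
def splitsOf : List (List A) → List (List (List A) × List (List A))
  | [] => [([], [])]
  | w :: ws =>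
      (((splitsOf ws).map (fun p =>
        (List.range (w.length + 1)).map (fun t => (w.take t :: p.1, w.drop t :: p.2))))).flatten

/-- Restriction of a candidate monomial: keep only the nonempty words together with
their indices. -/
def restrictMono (ws : List (List A)) (js : List ℕ) : Mono A :=
  let ps := (ws.zip js).filter (fun p => !p.1.isEmpty)
  (ps.map Prod.fst, ps.map Prod.snd)

/-- The product of colored quasisymmetric series: the coefficient of a monomial in `F·G`
is the sum, over all ways of writing each of its words as a concatenation of a word of a
monomial of `F` (on the left) and a word of a monomial of `G` (on the right), of the
products of the corresponding coefficients. -/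
def mulQ (F G : QSymA A) : QSymA A := fun m =>
  ((splitsOf m.1).map (fun p => F (restrictMono p.1 m.2) * G (restrictMono p.2 m.2))).sum

/-- The right perp operator `M^⊸` of `M ∈ QSym_A`, the linear operator on `NSym_A`
determined by `⟨M^⊸(H), G⟩ = ⟨H, G·M⟩`; explicitly, for the dual bases `{M_I}` and `{H_I}`,
`M^⊸(H) = Σ_I ⟨H, M_I · M⟩ H_I`. -/
noncomputable def rperp (M : QSymA A) (H : NSymA A) : NSymA A :=
  ∑ᶠ I ∈ {I : Sentence A | IsSentence I}, pairNQ H (mulQ (MQ I) M) • Hd I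

/-- The colored noncommutative Bernstein operator
`𝔹_v = Σ_u Σ_{Q : w(Q^r) = u} (-1)^{ℓ(Q)} H_{v·u} · (Σ_{S ⪰ Q} M_S^⊸)`,
where `Q` runs over all sentences, `u = w(Q^r)` is the concatenation of the words of `Q`
in reverse order, and `S` runs over all coarsenings of `Q`. -/
noncomputable def Bern (v : List A) (f : NSymA A) : NSymA A :=
  ∑ᶠ Q ∈ {Q : Sentence A | IsSentence Q},
    ((-1 : ℚ)) ^ Q.length •
      mulN (Hw (v ++ Q.reverse.flatten))
        (∑ᶠ S ∈ {S : Sentence A | Refines Q S}, rperp (MQ S) f)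

/-- The colored immaculate function `𝔖_J = 𝔹_{v_1} 𝔹_{v_2} ⋯ 𝔹_{v_h}(1)`. -/
noncomputable def ImmS (J : Sentence A) : NSymA A := J.foldr Bern (Hd [])

/-- The colored ribbon function `R_I = Σ_{J ⪰ I} (-1)^{ℓ(J) - ℓ(I)} H_J`. -/
noncomputable def Rib (I : Sentence A) : NSymA A :=
  ∑ᶠ J ∈ {J : Sentence A | Refines I J}, ((-1 : ℚ)) ^ (I.length - J.length) • Hd J

/-- The Pieri relation `J ⊂_w K` for a sentence `J = (v_1, …, v_h)` and a word `w`: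
`K = (u_1, …, u_g)` with `h ≤ g ≤ h+1` (setting `v_{h+1} = ∅`) and `u_j = v_j · q_j`
for words `q_j` (possibly empty) whose reversed concatenation `q_g ⋯ q_1` equals `w`. -/
def PieriRel (J : Sentence A) (w : List A) (K : Sentence A) : Prop :=
  J.length ≤ K.length ∧ K.length ≤ J.length + 1 ∧
  ∃ q : List (List A), q.length = K.length ∧ q.reverse.flatten = w ∧
    ∀ j < K.length, K.getD j [] = J.getD j [] ++ q.getD j []

/-- Right containment of a weak sentence `K` in `J`: same length, and each word of `K` is a
suffix of the corresponding word of `J`. -/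
def RightContained (K J : Sentence A) : Prop :=
  K.length = J.length ∧ ∀ i < J.length, (K.getD i []).IsSuffix (J.getD i [])

/-- The weak sentence `J/_R K`: remove each word of `K` from the right end of the
corresponding word of `J`. -/
def rightQuot (J K : Sentence A) : Sentence A :=
  List.zipWith (fun v u => v.take (v.length - u.length)) J K

/-- Left containment `J ⊆_L I`: `ℓ(J) ≤ ℓ(I)` and each word of `J` is a prefix of the
corresponding word of `I`. -/
def LeftContained (J I : Sentence A) : Prop :=
  J.length ≤ I.length ∧ ∀ i < J.length, (J.getD i []).IsPrefix (I.getD i [])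

/-- A skew colored immaculate tableau of shape `I/J`: a filling of the active boxes
(the `i`-th row keeps the last `|w_i| - |v_i|` boxes) with positive integers, rows weakly
increasing left to right, and the entries in the (active part of the) first column of `I`
strictly increasing top to bottom. -/
def IsSkewCIT (I J : Sentence A) (f : Filling) : Prop :=
  f.map List.length =
    (List.range I.length).map (fun i => (I.getD i []).length - (J.getD i []).length) ∧
  (∀ row ∈ f, row.Chain' (· ≤ ·)) ∧
  ((List.range I.length).filterMap
    (fun i => if (J.getD i []).length = 0 then (f.getD i []).head? else none)).Chain' (· < ·) ∧
  (∀ x ∈ f.flatten, 1 ≤ x)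

/-- The word of the type of a skew tableau at value `v`: the colors of the active boxes with
entry `v`, read left to right, bottom to top. -/
def skewTypeWord (I J : Sentence A) (f : Filling) (v : ℕ) : List A :=
  (((List.range I.length).reverse).map (fun i =>
    rowWith ((I.getD i []).drop (J.getD i []).length) (f.getD i []) v)).flatten

/-- `SkewHasType I J f K` : the skew tableau `f` of shape `I/J` has type `K`. -/
def SkewHasType (I J : Sentence A) (f : Filling) (K : Sentence A) : Prop :=
  ∀ v, 1 ≤ v → skewTypeWord I J f v = K.getD (v - 1) []

/-! ### The complement involution `ψ` and the row-strict functions -/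

/-- The complement `I^c` of a sentence: the unique sentence with the same maximal word
that splits exactly where `I` does not. -/
def complSent (I : Sentence A) : Sentence A :=
  let w := I.flatten
  let n := w.length
  if n = 0 then []
  else
    let splits := (((wl I).scanl (· + ·) 0).drop 1).dropLast
    let csplits := (List.range' 1 (n - 1)).filter (fun i => !(splits.contains i))
    splitByComp w (compOf csplits n)

/-- The `M_I`-coefficient of a colored quasisymmetric function. -/
noncomputable def coeffM (G : QSymA A) (I : Sentence A) : ℚ := G (I, List.range' 1 I.length)

/-- The image of `M_I` under `ψ`, via `M_I = Σ_{J ⪯ I} (-1)^{ℓ(J)-ℓ(I)} F_J` and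
`ψ(F_J) = F_{J^c}`. -/
noncomputable def psiM (I : Sentence A) : QSymA A :=
  ∑ᶠ J ∈ {J : Sentence A | Refines J I}, ((-1 : ℚ)) ^ (J.length - I.length) • FQ (complSent J)

/-- The linear involution `ψ` of `QSym_A`, determined by `ψ(F_I) = F_{I^c}`. -/
noncomputable def psiQ (G : QSymA A) : QSymA A :=
  ∑ᶠ I ∈ {I : Sentence A | IsSentence I}, coeffM G I • psiM I

/-- A colored row-strict immaculate tableau of shape `I`: entries strictly increase left to
right along each row and weakly increase top to bottom down the first column. -/
def IsCRSIT (I : Sentence A) (f : Filling) : Prop :=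
  f.map List.length = I.map List.length ∧
  (∀ row ∈ f, row.Chain' (· < ·)) ∧
  (f.filterMap List.head?).Chain' (· ≤ ·) ∧
  (∀ x ∈ f.flatten, 1 ≤ x)

/-- The word of the type of a row-strict tableau at value `v`: the colors of the boxes with
entry `v`, read left to right, top to bottom. -/
def rsTypeWord (I : Sentence A) (f : Filling) (v : ℕ) : List A :=
  ((I.zip f).map (fun p => rowWith p.1 p.2 v)).flatten

/-- The monomial `x_T` of a colored row-strict immaculate tableau. -/
def rsMonoOf (I : Sentence A) (f : Filling) : Mono A :=
  let vs := ((List.range (maxEntry f)).map (· + 1)).filter (fun v => !(rsTypeWord I f v).isEmpty)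
  (vs.map (rsTypeWord I f), vs)

/-- The colored row-strict dual immaculate function `ℛ𝔖*_J = Σ_T x_T`, summed over all
colored row-strict immaculate tableaux `T` of shape `J`. -/
noncomputable def rsDualImm (J : Sentence A) : QSymA A := fun m =>
  (Set.ncard {f : Filling | IsCRSIT J f ∧ rsMonoOf J f = m} : ℚ)

/-- `α ⪰ β` in the reverse lexicographic order on compositions: at the first index where
they differ, `α` has the *smaller* entry (padding with zeros). -/
def RevLexGE (α β : List ℕ) : Prop :=
  α = β ∨ ∃ i, (∀ j < i, α.getD j 0 = β.getD j 0) ∧ α.getD i 0 < β.getD i 0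

/-! ### Uncolored (ordinary) versions, for `QSym` -/

namespace Uncolored

/-- A composition: a list of positive integers. -/
def IsComposition (α : List ℕ) : Prop := ∀ a ∈ α, 1 ≤ a

/-- `β ⪯ α`: the composition `α` is obtained by summing adjacent parts of `β`. -/
def RefinesC (β α : List ℕ) : Prop :=
  ∃ P : List (List ℕ), (∀ p ∈ P, p ≠ []) ∧ P.flatten = β ∧ P.map List.sum = α

/-- A monomial `x_{i_1}^{a_1} ⋯ x_{i_m}^{a_m}` recorded by its exponents and its
strictly increasing positive indices. -/
abbrev MonoU := List ℕ × List ℕ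

/-- A quasisymmetric "series", recorded by its coefficient function on monomials.
`QSym` is the span of the monomial functions `MU α` inside this space. -/
abbrev QSymU := MonoU → ℚ

/-- Validity of a monomial: matching lengths, strictly increasing positive indices,
positive exponents. -/
def ValidMonoU (m : MonoU) : Prop :=
  m.1.length = m.2.length ∧ m.2.Chain' (· < ·) ∧ (∀ j ∈ m.2, 1 ≤ j) ∧ ∀ a ∈ m.1, 1 ≤ a

open Classical in
/-- The monomial quasisymmetric function `M_α`. -/
noncomputable def MU (α : List ℕ) : QSymU := fun m =>
  if m.1 = α ∧ ValidMonoU m then 1 else 0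

/-- The fundamental quasisymmetric function `F_α = Σ_{β ⪯ α} M_β`. -/
noncomputable def FU (α : List ℕ) : QSymU :=
  ∑ᶠ β ∈ {β : List ℕ | RefinesC β α}, MU β

/-- An immaculate tableau of shape `α`: positive integer entries, rows weakly increasing
left to right, first column strictly increasing top to bottom. -/
def IsIT (α : List ℕ) (f : Filling) : Prop :=
  f.map List.length = α ∧
  (∀ row ∈ f, row.Chain' (· ≤ ·)) ∧
  (f.filterMap List.head?).Chain' (· < ·) ∧
  (∀ x ∈ f.flatten, 1 ≤ x)

/-- The number of boxes of `f` with entry `v`. -/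
def countOf (f : Filling) (v : ℕ) : ℕ := (f.flatten.filter (fun x => x == v)).length

/-- The monomial `x^T` of an immaculate tableau `T` of type `β`:
`x_1^{β_1} ⋯ x_h^{β_h}` (zero exponents skipped). -/
def monoOfU (f : Filling) : MonoU :=
  let vs := ((List.range (maxEntry f)).map (· + 1)).filter (fun v => decide (countOf f v ≠ 0))
  (vs.map (countOf f), vs)

/-- The dual immaculate function `𝔖*_α = Σ_T x^T`, summed over all immaculate tableaux
of shape `α`. -/
noncomputable def dualImmU (α : List ℕ) : QSymU := fun m =>
  (Set.ncard {f : Filling | IsIT α f ∧ monoOfU f = m} : ℚ)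

/-- The descent composition `co(U)` of a standard immaculate tableau. -/
def descComp (f : Filling) : List ℕ :=
  if nBoxes f = 0 then [] else compOf (descList f) (nBoxes f)

/-- `L_{α,β}`: the number of standard immaculate tableaux of shape `α` with descent
composition `β`. -/
noncomputable def LU (α β : List ℕ) : ℕ :=
  Set.ncard {f : Filling | IsIT α f ∧ IsStandardF f ∧ descComp f = β}

/-- Edges of the immaculate descent graph `𝔇^n`. -/
def IsEdgeU (α β : List ℕ) : Prop := β ≠ α ∧ LU α β ≠ 0

/-- Directed paths from `α` to `β` in the immaculate descent graph, recorded by their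
lists of successive vertices; `[α]` is the empty path at `α`. -/
def PathsU (α β : List ℕ) : Set (List (List ℕ)) :=
  {p | p.head? = some α ∧ p.getLast? = some β ∧ p.Chain' IsEdgeU}

/-- The signed weight `(-1)^{ℓ(𝒫)} prod(𝒫)` of a path. -/
noncomputable def pathWeightU (p : List (List ℕ)) : ℚ :=
  ((-1 : ℚ)) ^ (p.length - 1) * ((p.zip p.tail).map (fun e => (LU e.1 e.2 : ℚ))).prod

/-- `L⁻¹_{α,β} = Σ_𝒫 (-1)^{ℓ(𝒫)} prod(𝒫)`, over directed paths from `α` to `β` in `𝔇^n`. -/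
noncomputable def LinvU (α β : List ℕ) : ℚ :=
  ∑ᶠ p ∈ PathsU α β, pathWeightU p

end Uncolored

end ColoredImm

namespace ColoredImm

theorem countP_lt_aux {α : Type*} (l : List α) (p q : α → Bool) (hpq : ∀ x ∈ l, p x = true → q x = true)
    (b : α) (hb : b ∈ l) (hp : p b = false) (hq : q b = true) : l.countP p < l.countP q := by
  induction l with
  | nil => simp at hb
  | cons a l ih =>
    have hle : l.countP p ≤ l.countP q :=
      List.countP_mono_left (fun x hx => hpq x (List.mem_cons_of_mem _ hx))
    rcases List.mem_cons.1 hb with rfl | hb'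
    · simp [List.countP_cons, hp, hq]; omega
    · have h1 := ih (fun x hx => hpq x (List.mem_cons_of_mem _ hx)) hb'
      have h2 := hpq a (by simp)
      simp only [List.countP_cons]
      by_cases hpa : p a = true
      · simp [hpa, h2 hpa]; exact h1
      · simp [hpa]; omega

theorem rowWith_length {A : Type*} (w : List A) (row : List ℕ) (v : ℕ)
    (h : row.length = w.length) : (rowWith w row v).length = row.count v := by
  unfold rowWith
  induction row generalizing w with
  | nil => simp
  | cons a l ih =>
    cases w with
    | nil => simp at h
    | cons c w =>
      have := ih w (by simpa using h)
      simp only [List.length_map] at this ⊢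
      by_cases hav : a = v
      · simp [hav, this]
      · simp [hav, this]

theorem typeWord_length {A : Type*} (J : Sentence A) (f : Filling) (v : ℕ)
    (h : f.map List.length = J.map List.length) :
    (typeWord J f v).length = f.flatten.count v := by
  unfold typeWord
  induction f generalizing J with
  | nil => simp
  | cons a l ih =>
    cases J with
    | nil => simp at h
    | cons c w =>
      simp only [List.map_cons, List.cons.injEq] at h
      have := ih w h.2
      have h3 := rowWith_length c a v h.1
      simp only [List.zip_cons_cons, List.reverse_cons, List.map_append, List.flatten_append,
        List.length_append, this, List.flatten_cons, List.count_append]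
      simp [h3, add_comm]

theorem map_entry_boxes (f : Filling) : (boxes f).map (entryAt f) = f.flatten := by
  unfold boxes
  rw [List.map_flatten, List.map_map]
  congr 1
  apply List.ext_getElem
  · simp
  · intro i h1 h2
    apply List.ext_getElem
    · simp [h2]
    · intro j h3 h4
      simp [entryAt, h2, h4]

theorem mem_boxes (f : Filling) (r j : ℕ) (hr : r < f.length) (hj : j < (f.getD r []).length) :
    (r, j) ∈ boxes f := by
  unfold boxes
  simp only [List.mem_flatten, List.mem_map, List.mem_range]
  exact ⟨_, ⟨r, hr, rfl⟩, List.mem_map.2 ⟨j, List.mem_range.2 hj, rfl⟩⟩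

theorem rank_not_lt (f g : Filling) (hp : f.flatten.Perm g.flatten) (b : ℕ × ℕ)
    (hb : b ∈ boxes f)
    (h : ((boxes f).filter (fun b' => beforeB f b' b)).length =
      ((boxes g).filter (fun b' => beforeB g b' b)).length) :
    ¬ entryAt f b < entryAt g b := by
  intro hlt
  rw [← List.countP_eq_length_filter, ← List.countP_eq_length_filter] at h
  have h1 : (boxes f).countP (fun b' => beforeB f b' b) <
      (boxes f).countP ((fun x => decide (x < entryAt g b)) ∘ entryAt f) := by
    apply countP_lt_aux _ _ _ _ b hb
    · simp [beforeB]
    · simpa using hlt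
    · intro x _ hx
      simp [beforeB] at hx
      simp; omega
  have h2 : (boxes g).countP ((fun x => decide (x < entryAt g b)) ∘ entryAt g) ≤
      (boxes g).countP (fun b' => beforeB g b' b) := by
    apply List.countP_mono_left
    intro x _ hx
    simp at hx
    simp [beforeB, hx]
  rw [← List.countP_map, map_entry_boxes] at h1 h2
  rw [hp.countP_eq] at h1
  omega

theorem flatten_perm {A : Type*} (J B : Sentence A)
    (f₁ f₂ : Filling) (h₁ : IsCIT J f₁) (h₂ : IsCIT J f₂)
    (ht₁ : HasType J f₁ B) (ht₂ : HasType J f₂ B) : f₁.flatten.Perm f₂.flatten := by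
  rw [List.perm_iff_count]
  intro v
  rcases Nat.eq_zero_or_pos v with rfl | hv
  · rw [List.count_eq_zero_of_not_mem, List.count_eq_zero_of_not_mem]
    · intro h; have := h₂.2.2.2 0 h; omega
    · intro h; have := h₁.2.2.2 0 h; omega
  · rw [← typeWord_length J f₁ v h₁.1, ← typeWord_length J f₂ v h₂.1, ht₁ v hv, ht₂ v hv]

/-- Two colored immaculate tableaux of the same shape `J` and the same
type `B` are equal if and only if their standardizations are equal. -/
theorem statement0 {A : Type*} (J : Sentence A) (hJ : IsSentence J) (B : Sentence A)
    (f₁ f₂ : Filling) (h₁ : IsCIT J f₁) (h₂ : IsCIT J f₂)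
    (ht₁ : HasType J f₁ B) (ht₂ : HasType J f₂ B) :
    f₁ = f₂ ↔ stdFill f₁ = stdFill f₂ := by
  constructor
  · rintro rfl; rfl
  intro h
  have hp := flatten_perm J B f₁ f₂ h₁ h₂ ht₁ ht₂
  have hlen : f₁.map List.length = f₂.map List.length := h₁.1.trans h₂.1.symm
  have hl : f₁.length = f₂.length := by simpa using congrArg List.length hlen
  apply List.ext_getElem hl
  intro r hr1 hr2
  have hrow : f₁[r].length = f₂[r].length := by
    have := List.getElem_of_eq hlen (i := r) (by simpa using hr1)
    simpa using this
  apply List.ext_getElem hrow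
  intro j hj1 hj2
  have hb1 := mem_boxes f₁ r j hr1 (by simpa [hr1] using hj1)
  have hb2 := mem_boxes f₂ r j hr2 (by simpa [hr2] using hj2)
  have hrank : ((boxes f₁).filter (fun b' => beforeB f₁ b' (r, j))).length =
      ((boxes f₂).filter (fun b' => beforeB f₂ b' (r, j))).length := by
    have e := congrArg (fun g => entryAt g (r, j)) h
    simpa [entryAt, stdFill, hr1, hr2, hj1, hj2] using e
  have a1 := rank_not_lt f₁ f₂ hp _ hb1 hrank
  have a2 := rank_not_lt f₂ f₁ hp.symm _ hb2 hrank.symm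
  have e : entryAt f₁ (r, j) = entryAt f₂ (r, j) := by omega
  simpa [entryAt, hr1, hr2, hj1, hj2] using e

end ColoredImm
end

section
/- Let U be a standard colored immaculate tableau of shape J. For a weak sentence B, there exists a colored immaculate tableau T of shape J and type B with std(T)=U if and only if the flattening B̃ of B is a refinement of the colored descent composition co_A(U). -/
open scoped BigOperators

namespace ColoredImm

theorem sorted_ext {l₁ l₂ : List ℕ} (h₁ : l₁.Pairwise (· < ·)) (h₂ : l₂.Pairwise (· < ·))
    (h : ∀ x, x ∈ l₁ ↔ x ∈ l₂) : l₁ = l₂ := by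
  have n1 : l₁.Nodup := h₁.imp (fun h => Nat.ne_of_lt h)
  have n2 : l₂.Nodup := h₂.imp (fun h => Nat.ne_of_lt h)
  exact List.Perm.eq_of_pairwise (fun a b _ _ h h' => absurd h (Nat.lt_asymm h')) h₁ h₂
    ((List.perm_ext_iff_of_nodup n1 n2).2 h)

theorem take_succ_flatten {A : Type*} (B : Sentence A) (m : ℕ) :
    (B.take (m+1)).flatten = (B.take m).flatten ++ B.getD m [] := by
  induction B generalizing m with
  | nil => simp
  | cons b B ih =>
    cases m with
    | zero => simp
    | succ m => simp [ih m]

theorem flattenWS_flatten {A : Type*} (B : Sentence A) : (flattenWS B).flatten = B.flatten := by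
  induction B with
  | nil => rfl
  | cons b B ih =>
    unfold flattenWS at *
    cases b <;> simp [ih]

theorem flattenWS_ne {A : Type*} (B : Sentence A) : ∀ w ∈ flattenWS B, w ≠ [] := by
  intro w hw
  simp [flattenWS] at hw
  exact hw.2

theorem flattenWS_take {A : Type*} (B : Sentence A) (x : ℕ) :
    (∃ m, ((flattenWS B).take m).flatten.length = x) ↔ ∃ m, (B.take m).flatten.length = x := by
  induction B generalizing x with
  | nil => simp [flattenWS]
  | cons b B ih =>
    cases b with
    | nil =>
      have h1 : flattenWS ([] :: B) = flattenWS B := by simp [flattenWS]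
      rw [h1, ih]
      constructor
      · rintro ⟨m, hm⟩; exact ⟨m+1, by simpa using hm⟩
      · rintro ⟨m, hm⟩
        cases m with
        | zero => exact ⟨0, by simpa using hm⟩
        | succ m => exact ⟨m, by simpa using hm⟩
    | cons a b =>
      have h1 : flattenWS ((a::b) :: B) = (a::b) :: flattenWS B := by simp [flattenWS]
      rw [h1]
      constructor
      · rintro ⟨m, hm⟩
        cases m with
        | zero => exact ⟨0, by simpa using hm⟩
        | succ m =>
          obtain ⟨k, hk⟩ := (ih _).1 ⟨m, rfl⟩
          refine ⟨k+1, ?_⟩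
          rw [List.take_succ_cons, List.flatten_cons, List.length_append] at *
          omega
      · rintro ⟨m, hm⟩
        cases m with
        | zero => exact ⟨0, by simpa using hm⟩
        | succ m =>
          obtain ⟨k, hk⟩ := (ih _).2 ⟨m, rfl⟩
          refine ⟨k+1, ?_⟩
          rw [List.take_succ_cons, List.flatten_cons, List.length_append] at *
          omega

theorem refines_cons {A : Type*} (C : Sentence A) (e : List A) (E : Sentence A) :
    Refines C (e :: E) ↔ ∃ C1 C2, C1 ≠ [] ∧ C1 ++ C2 = C ∧ C1.flatten = e ∧ Refines C2 E := by
  constructor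
  · rintro ⟨P, h1, h2, h3⟩
    cases P with
    | nil => simp at h3
    | cons p P =>
      simp only [List.map_cons, List.cons.injEq] at h3
      exact ⟨p, P.flatten, h1 p (by simp), by simpa using h2, h3.1, P,
        fun q hq => h1 q (by simp [hq]), rfl, h3.2⟩
  · rintro ⟨C1, C2, h1, rfl, rfl, P, h2, rfl, rfl⟩
    refine ⟨C1 :: P, ?_, by simp, by simp⟩
    intro p hp
    rcases List.mem_cons.1 hp with rfl | hp
    · exact h1
    · exact h2 p hp

theorem refines_nil {A : Type*} (C : Sentence A) : Refines C [] ↔ C = [] := by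
  constructor
  · rintro ⟨P, h1, h2, h3⟩
    simp at h3; subst h3; simpa using h2.symm
  · rintro rfl; exact ⟨[], by simp, rfl, rfl⟩

def compFrom (a : ℕ) (ds : List ℕ) (n : ℕ) : List ℕ :=
  List.zipWith (fun a b => b - a) (a :: ds) (ds ++ [n])

theorem refines_split {A : Type*} (ds : List ℕ) (a n : ℕ) (w : List A) (C : Sentence A)
    (hds : (a :: (ds ++ [n])).Pairwise (· < ·)) (hw : w.length = n - a) :
    Refines C (splitByComp w (compFrom a ds n)) ↔
      C.flatten = w ∧ ∀ d ∈ ds, ∃ m, (C.take m).flatten.length = d - a := by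
  induction ds generalizing a w C with
  | nil =>
    have han : a < n := by simpa using hds
    have : splitByComp w (compFrom a [] n) = [w] := by
      simp [compFrom, splitByComp, ← hw]
    rw [this, refines_cons]
    constructor
    · rintro ⟨C1, C2, h1, h2, h3, h4⟩
      rw [refines_nil] at h4
      subst h4; subst h2; simpa using h3
    · rintro ⟨h, -⟩
      refine ⟨C, [], ?_, by simp, h, (refines_nil _).2 rfl⟩
      rintro rfl
      simp at h
      subst h; simp at hw; omega
  | cons d ds ih =>
    have h1 : splitByComp w (compFrom a (d::ds) n)
      = w.take (d-a) :: splitByComp (w.drop (d-a)) (compFrom d ds n) := by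
      simp [compFrom, splitByComp]
    have hds' : (d :: (ds ++ [n])).Pairwise (· < ·) := by
      rw [List.cons_append, List.pairwise_cons] at hds; exact hds.2
    have had : a < d := by
      rw [List.cons_append, List.pairwise_cons] at hds; exact hds.1 d (by simp)
    have hdn : d < n := (List.pairwise_cons.1 hds').1 n (by simp)
    have hdd : ∀ x ∈ ds, d < x := fun x hx => (List.pairwise_cons.1 hds').1 x (by simp [hx])
    rw [h1, refines_cons]
    have hw' : (w.drop (d-a)).length = n - d := by rw [List.length_drop]; omega
    constructor
    · rintro ⟨C1, C2, h1, rfl, h3, h4⟩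
      rw [ih d _ C2 hds' hw'] at h4
      have hl : C1.flatten.length = d - a := by rw [h3, List.length_take]; omega
      refine ⟨by rw [List.flatten_append, h3, h4.1, List.take_append_drop], ?_⟩
      intro x hx
      rcases List.mem_cons.1 hx with rfl | hx
      · exact ⟨C1.length, by rw [List.take_left]; exact hl⟩
      · obtain ⟨m, hm⟩ := h4.2 x hx
        refine ⟨C1.length + m, ?_⟩
        have := hdd x hx
        rw [List.take_length_add_append, List.flatten_append, List.length_append, hm, hl]
        omega
    · rintro ⟨h2, h3⟩
      obtain ⟨m, hm⟩ := h3 d (by simp)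
      have hC : C.flatten = (C.take m).flatten ++ (C.drop m).flatten := by
        rw [← List.flatten_append, List.take_append_drop]
      have e1 : (C.take m).flatten = w.take (d-a) := by
        rw [← h2, hC, ← hm, List.take_left]
      have e2 : (C.drop m).flatten = w.drop (d-a) := by
        rw [← h2, hC, ← hm, List.drop_left]
      refine ⟨C.take m, C.drop m, ?_, List.take_append_drop _ _, e1, ?_⟩
      · intro h; rw [h] at hm; simp at hm; omega
      · rw [ih d _ _ hds' hw']
        refine ⟨e2, ?_⟩
        intro x hx
        obtain ⟨m', hm'⟩ := h3 x (by simp [hx])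
        have hdx := hdd x hx
        refine ⟨m' - m, ?_⟩
        have hmm : m ≤ m' := by
          by_contra hlt
          push Not at hlt
          have : (C.take m).flatten = (C.take m').flatten ++ ((C.take m).drop m').flatten := by
            rw [← List.flatten_append]
            congr 1
            conv_lhs => rw [← List.take_append_drop m' (C.take m)]
            rw [List.take_take, min_eq_left hlt.le]
          rw [this, List.length_append] at hm
          omega
        have : (C.take m').flatten = (C.take m).flatten ++ ((C.drop m).take (m'-m)).flatten := by
          rw [← List.flatten_append, ← List.take_add]
          congr 2; omega
        rw [this, List.length_append] at hm'
        omega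

/-- middle condition to `g`. -/
theorem exists_g {A : Type*} (B : Sentence A) (n : ℕ) (c : ℕ → A)
    (hB : B.flatten = (List.range n).map c) :
    ∃ g : ℕ → ℕ, (∀ i < n, 1 ≤ g i) ∧ (∀ i j, i ≤ j → j < n → g i ≤ g j) ∧
      (∀ v, 1 ≤ v → ((List.range n).filter (fun i => g i == v)).map c = B.getD (v-1) []) ∧
      ∀ d, 1 ≤ d → d < n → (∃ m, (B.take m).flatten.length = d) → g (d-1) < g d := by
  have htot : (B.take B.length).flatten.length = n := by
    rw [List.take_length, hB]; simp
  have hsucc : ∀ m, (B.take m).flatten.length ≤ (B.take (m+1)).flatten.length := by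
    intro m; rw [take_succ_flatten, List.length_append]; omega
  have hmono : Monotone (fun m => (B.take m).flatten.length) := monotone_nat_of_le_succ hsucc
  have hle : ∀ m, (B.take m).flatten.length ≤ n := by
    intro m
    rcases le_total m B.length with h | h
    · rw [← htot]; exact hmono h
    · rw [List.take_of_length_le h, ← htot, List.take_length]
  have hpre : ∀ m, (B.take m).flatten = (List.range ((B.take m).flatten.length)).map c := by
    intro m
    have : B.flatten = (B.take m).flatten ++ (B.drop m).flatten := by
      rw [← List.flatten_append, List.take_append_drop]
    have h2 : (B.take m).flatten = B.flatten.take ((B.take m).flatten.length) := by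
      rw [this, List.take_left]
    conv_lhs => rw [h2, hB, ← List.map_take, List.take_range, min_eq_left (hle m)]
  set s : ℕ → ℕ := fun m => (B.take m).flatten.length with hs
  have : ∀ i, ∃ gi, i < n → ∀ v, gi ≤ v ↔ i < s v := by
    intro i
    by_cases hi : i < n
    · have hex : ∃ m, i < s m := ⟨B.length, by
        change i < (B.take B.length).flatten.length
        rw [htot]; exact hi⟩
      refine ⟨Nat.find hex, fun _ v => ?_⟩
      constructor
      · intro h; exact (Nat.find_spec hex).trans_le (hmono h)
      · intro h; exact Nat.find_min' hex h
    · exact ⟨0, fun h => absurd h hi⟩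
  choose g hg using this
  refine ⟨g, ?_, ?_, ?_, ?_⟩
  · intro i hi
    by_contra h
    have := (hg i hi 0).1 (by omega)
    simp [hs] at this
  · intro i j hij hj
    rw [hg i (by omega)]
    have := (hg j hj (g j)).1 le_rfl
    omega
  · intro v hv
    obtain ⟨k, rfl⟩ : ∃ k, v = k+1 := ⟨v-1, by omega⟩
    have h1 := take_succ_flatten B k
    rw [hpre (k+1), hpre k] at h1
    have h2 : List.range (s (k+1)) = List.range (s k) ++
        (List.range n).filter (fun i => g i == k+1) := by
      apply sorted_ext
      · exact List.pairwise_lt_range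
      · rw [List.pairwise_append]
        refine ⟨List.pairwise_lt_range, List.pairwise_lt_range.filter _, ?_⟩
        intro a ha b hb
        simp only [List.mem_range, List.mem_filter, beq_iff_eq] at ha hb
        have := (hg b hb.1 k).not.1 (by omega)
        omega
      · intro x
        simp only [List.mem_append, List.mem_range, List.mem_filter, beq_iff_eq]
        have e1 := hle (k+1)
        have e2 := hsucc k
        by_cases hx : x < n
        · have a1 := hg x hx k
          have a2 := hg x hx (k+1)
          rw [← a1, ← a2]; omega
        · simp only [hs]; omega
    change List.map c (List.range (s (k+1))) = _ at h1
    rw [h2, List.map_append] at h1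
    simpa using List.append_cancel_left h1
  · rintro d hd hdn ⟨m, hm⟩
    have h1 := (hg (d-1) (by omega) m).2 (by simp only [hs]; omega)
    have h2 := (hg d hdn m).not.2 (by simp only [hs]; omega)
    omega

theorem of_g {A : Type*} (B : Sentence A) (n : ℕ) (c : ℕ → A) (g : ℕ → ℕ)
    (h1 : ∀ i < n, 1 ≤ g i) (h2 : ∀ i j, i ≤ j → j < n → g i ≤ g j)
    (h3 : ∀ v, 1 ≤ v → ((List.range n).filter (fun i => g i == v)).map c = B.getD (v-1) []) :
    B.flatten = (List.range n).map c ∧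
      ∀ d, 1 ≤ d → d < n → g (d-1) < g d → ∃ m, (B.take m).flatten.length = d := by
  have key : ∀ m, (B.take m).flatten = ((List.range n).filter (fun i => decide (g i ≤ m))).map c := by
    intro m
    induction m with
    | zero =>
      have : (List.range n).filter (fun i => decide (g i ≤ 0)) = [] := by
        rw [List.filter_eq_nil_iff]
        intro a ha
        have := h1 a (List.mem_range.1 ha)
        simp; omega
      rw [this]; simp
    | succ m ih =>
      rw [take_succ_flatten, ih]
      have := h3 (m+1) (by omega)
      simp only [Nat.add_sub_cancel] at this
      rw [← this, ← List.map_append]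
      congr 1
      apply sorted_ext
      · rw [List.pairwise_append]
        refine ⟨List.pairwise_lt_range.filter _, List.pairwise_lt_range.filter _, ?_⟩
        intro a ha b hb
        simp only [List.mem_range, List.mem_filter, beq_iff_eq, decide_eq_true_eq] at ha hb
        by_contra hlt
        have := h2 b a (by omega) ha.1
        omega
      · exact List.pairwise_lt_range.filter _
      · intro x
        simp only [List.mem_append, List.mem_range, List.mem_filter, beq_iff_eq, decide_eq_true_eq]
        omega
  constructor
  · have := key B.length
    rw [List.take_length] at this
    rw [this, List.filter_eq_self.2]
    intro a ha
    by_contra hlt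
    have h4 := h3 (g a) (h1 a (List.mem_range.1 ha))
    rw [List.getD_eq_default] at h4
    · simp only [List.map_eq_nil_iff, List.filter_eq_nil_iff] at h4
      exact h4 a ha (by simp)
    · simp at hlt; omega
  · intro d hd hdn hlt
    refine ⟨g (d-1), ?_⟩
    rw [key]
    have : (List.range n).filter (fun i => decide (g i ≤ g (d-1))) = List.range d := by
      apply sorted_ext (List.pairwise_lt_range.filter _) List.pairwise_lt_range
      intro x
      simp only [List.mem_range, List.mem_filter, decide_eq_true_eq]
      constructor
      · rintro ⟨hx, hx'⟩
        by_contra hge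
        have := h2 d x (by omega) hx
        omega
      · intro hx
        exact ⟨by omega, h2 _ _ (by omega) (by omega)⟩
    rw [this]; simp

theorem refines_coA {A : Type*} [Inhabited A] (J B : Sentence A) (U : Filling) :
    Refines (flattenWS B) (coA J U) ↔
      B.flatten = readWord J U ∧
        ∀ d, 1 ≤ d → d < nBoxes U → rowOf U d < rowOf U (d+1) →
          ∃ m, (B.take m).flatten.length = d := by
  unfold coA
  split_ifs with h
  · rw [refines_nil, ← flattenWS_flatten]
    constructor
    · intro h'
      rw [h']
      exact ⟨by simp [readWord, h], fun d _ _ => by omega⟩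
    · rintro ⟨h', -⟩
      simp only [readWord, h, List.range_zero, List.map_nil, List.flatten_eq_nil_iff] at h'
      rw [List.eq_nil_iff_forall_not_mem]
      intro a ha
      exact flattenWS_ne B a ha (h' a ha)
  · have := refines_split (descList U) 0 (nBoxes U) (readWord J U) (flattenWS B) ?_ (by simp [readWord])
    · change Refines _ (splitByComp _ (compFrom 0 (descList U) (nBoxes U))) ↔ _
      rw [this, flattenWS_flatten]
      refine and_congr Iff.rfl ?_
      simp only [flattenWS_take, descList, List.mem_filter, List.mem_range'_1, decide_eq_true_eq, Nat.sub_zero]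
      constructor
      · intro h d h1 h2 h3; exact h d ⟨⟨h1, by omega⟩, h3⟩
      · intro h d h1; exact h d h1.1.1 (by omega) h1.2
    · rw [List.pairwise_cons, List.pairwise_append]
      refine ⟨?_, List.Pairwise.filter _ List.pairwise_lt_range', by simp, ?_⟩
      · intro x hx
        simp only [descList, List.mem_append, List.mem_filter, List.mem_range'_1, List.mem_singleton] at hx
        omega
      · intro x hx y hy
        simp only [descList, List.mem_filter, List.mem_range'_1, List.mem_singleton] at hx hy
        omega

end ColoredImm

namespace ColoredImm

def rowBoxes (f : Filling) (r : ℕ) : List (ℕ × ℕ) :=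
  (List.range (f.getD r []).length).map (fun j => (r, j))

theorem mem_rowBoxes (f : Filling) (r : ℕ) (b : ℕ × ℕ) :
    b ∈ rowBoxes f r ↔ b.1 = r ∧ b.2 < (f.getD r []).length := by
  obtain ⟨x, y⟩ := b
  simp only [rowBoxes, List.mem_map, List.mem_range, Prod.mk.injEq]
  constructor
  · rintro ⟨a, h, rfl, rfl⟩; exact ⟨rfl, h⟩
  · rintro ⟨rfl, h⟩; exact ⟨y, h, rfl, rfl⟩

theorem mem_boxes_s1 (f : Filling) (b : ℕ × ℕ) :
    b ∈ boxes f ↔ b.1 < f.length ∧ b.2 < (f.getD b.1 []).length := by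
  change b ∈ ((List.range f.length).map (rowBoxes f)).flatten ↔ _
  simp only [List.mem_flatten, List.mem_map, List.mem_range]
  constructor
  · rintro ⟨l, ⟨r, hr, rfl⟩, hb⟩
    rw [mem_rowBoxes] at hb
    obtain ⟨rfl, h⟩ := hb
    exact ⟨hr, h⟩
  · rintro ⟨h1, h2⟩
    exact ⟨_, ⟨b.1, h1, rfl⟩, (mem_rowBoxes _ _ _).2 ⟨rfl, h2⟩⟩

theorem boxes_nodup (f : Filling) : (boxes f).Nodup := by
  change ((List.range f.length).map (rowBoxes f)).flatten.Nodup
  rw [List.nodup_flatten]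
  constructor
  · intro l hl
    simp only [List.mem_map] at hl
    obtain ⟨r, -, rfl⟩ := hl
    exact List.Nodup.map (fun a b h => by simpa using h) List.nodup_range
  · rw [List.pairwise_map]
    refine List.pairwise_lt_range.imp ?_
    intro a b hab x hx hy
    rw [mem_rowBoxes] at hx hy
    omega

theorem getD_len {X : Type*} {f : List (List X)} {Y : Type*} {J : List (List Y)}
    (h : f.map List.length = J.map List.length) (r : ℕ) :
    (f.getD r []).length = (J.getD r []).length := by
  have h1 : (f.map List.length).getD r 0 = (J.map List.length).getD r 0 := by rw [h]
  simp only [List.getD_eq_getElem?_getD, List.getElem?_map] at h1 ⊢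
  cases h2 : f[r]? <;> cases h3 : J[r]? <;> simp [h2, h3] at h1 ⊢ <;> omega

theorem len_eq {X : Type*} {f : List (List X)} {Y : Type*} {J : List (List Y)}
    (h : f.map List.length = J.map List.length) : f.length = J.length := by
  have := congrArg List.length h
  simpa using this

theorem boxes_congr {f U : Filling} (h : f.map List.length = U.map List.length) :
    boxes f = boxes U := by
  unfold boxes
  rw [len_eq h]
  simp only [getD_len h]

theorem eq_map_range {X : Type*} (l : List X) (d : X) :
    l = (List.range l.length).map (fun i => l.getD i d) := by
  apply List.ext_getElem
  · simp
  · intro i h1 h2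
    simp [h1]

theorem fill_eq (f : Filling) :
    f = (List.range f.length).map (fun r => (List.range (f.getD r []).length).map
      (fun j => entryAt f (r, j))) := by
  conv_lhs => rw [eq_map_range f []]
  apply List.map_congr_left
  intro r _
  exact eq_map_range _ 0

theorem flatten_eq (f : Filling) : f.flatten = (boxes f).map (entryAt f) := by
  conv_lhs => rw [fill_eq f]
  unfold boxes
  rw [List.map_flatten, List.map_map]
  congr 1
  apply List.map_congr_left
  intro r _
  simp

theorem zip_eq {X Y : Type*} (l : List X) (l' : List Y) (d : X) (d' : Y) (h : l'.length = l.length) :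
    l.zip l' = (List.range l'.length).map (fun i => (l.getD i d, l'.getD i d')) := by
  apply List.ext_getElem
  · simp [h]
  · intro i h1 h2
    simp at h1 h2
    simp [h1]

def colorB {A : Type*} [Inhabited A] (J : Sentence A) (b : ℕ × ℕ) : A :=
  (J.getD b.1 []).getD b.2 default

def revBoxes (f : Filling) : List (ℕ × ℕ) :=
  ((List.range f.length).reverse.map (rowBoxes f)).flatten

theorem mem_revBoxes (f : Filling) (b : ℕ × ℕ) : b ∈ revBoxes f ↔ b ∈ boxes f := by
  change _ ↔ b ∈ ((List.range f.length).map (rowBoxes f)).flatten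
  simp [revBoxes]

theorem revBoxes_pairwise (f : Filling) :
    (revBoxes f).Pairwise (fun b b' => b'.1 < b.1 ∨ (b.1 = b'.1 ∧ b.2 < b'.2)) := by
  unfold revBoxes
  rw [List.pairwise_flatten]
  constructor
  · intro l hl
    simp only [List.mem_map] at hl
    obtain ⟨r, -, rfl⟩ := hl
    unfold rowBoxes
    rw [List.pairwise_map]
    exact List.pairwise_lt_range.imp (fun h => Or.inr ⟨rfl, h⟩)
  · rw [List.pairwise_map, List.pairwise_reverse]
    refine List.pairwise_lt_range.imp ?_
    intro a b hab x hx y hy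
    rw [mem_rowBoxes] at hx hy
    omega

theorem typeWord_eq {A : Type*} [Inhabited A] (J : Sentence A) (f : Filling)
    (h : f.map List.length = J.map List.length) (v : ℕ) :
    typeWord J f v = ((revBoxes f).filter (fun b => entryAt f b == v)).map (colorB J) := by
  unfold typeWord revBoxes
  rw [zip_eq J f [] [] (len_eq h), List.filter_flatten, List.map_flatten, ← List.map_reverse]
  simp only [List.map_map]
  congr 1
  apply List.map_congr_left
  intro r _
  simp only [Function.comp, rowWith, rowBoxes]
  rw [zip_eq (J.getD r []) (f.getD r []) default 0 (getD_len h r)]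
  rw [List.filter_map, List.filter_map, List.map_map, List.map_map]
  rfl

theorem beforeB_iff (f : Filling) (b b' : ℕ × ℕ) : beforeB f b b' = true ↔
    entryAt f b < entryAt f b' ∨
    (entryAt f b = entryAt f b' ∧ (b'.1 < b.1 ∨ (b.1 = b'.1 ∧ b.2 < b'.2))) := by
  simp [beforeB]

theorem before_irrefl (f : Filling) (b : ℕ × ℕ) : ¬ beforeB f b b = true := by
  rw [beforeB_iff]; omega

theorem before_asymm (f : Filling) (b b' : ℕ × ℕ) (h : beforeB f b b' = true) :
    ¬ beforeB f b' b = true := by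
  rw [beforeB_iff] at *; omega

theorem before_trans (f : Filling) (b b' b'' : ℕ × ℕ) (h : beforeB f b b' = true)
    (h' : beforeB f b' b'' = true) : beforeB f b b'' = true := by
  rw [beforeB_iff] at *; omega

theorem before_total (f : Filling) (b b' : ℕ × ℕ) (h : b ≠ b') :
    beforeB f b b' = true ∨ beforeB f b' b = true := by
  have : b.1 ≠ b'.1 ∨ b.2 ≠ b'.2 := by
    by_contra h'; push Not at h'; exact h (Prod.ext h'.1 h'.2)
  simp only [beforeB_iff]; omega

def Star (f U : Filling) : Prop := ∀ b ∈ boxes U, ∀ b' ∈ boxes U,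
  (entryAt U b < entryAt U b' ↔ beforeB f b b' = true)

theorem entry_stdFill (f : Filling) (b : ℕ × ℕ) (hb : b ∈ boxes f) :
    entryAt (stdFill f) b = 1 + ((boxes f).filter (fun b' => beforeB f b' b)).length := by
  rw [mem_boxes_s1] at hb
  obtain ⟨r, j⟩ := b
  simp only at hb
  have h1 : (stdFill f).getD r [] = (List.range (f.getD r []).length).map (fun j =>
      1 + ((boxes f).filter (fun b' => beforeB f b' (r, j))).length) := by
    unfold stdFill
    rw [List.getD_eq_getElem _ _ (by simpa using hb.1)]
    simp
  unfold entryAt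
  rw [h1, List.getD_eq_getElem _ _ (by simpa using hb.2)]
  simp

theorem star_of_std (f U : Filling) (h : f.map List.length = U.map List.length)
    (hs : stdFill f = U) : Star f U := by
  have key : ∀ b ∈ boxes f, ∀ b' ∈ boxes f, beforeB f b b' = true → entryAt U b < entryAt U b' := by
    intro b hb b' hb' hbb
    rw [← hs, entry_stdFill f b hb, entry_stdFill f b' hb']
    have hsub : (b :: (boxes f).filter (fun x => beforeB f x b)) ⊆
        (boxes f).filter (fun x => beforeB f x b') := by
      intro x hx
      rcases List.mem_cons.1 hx with rfl | hx
      · exact List.mem_filter.2 ⟨hb, hbb⟩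
      · rw [List.mem_filter] at hx ⊢
        exact ⟨hx.1, before_trans f _ _ _ hx.2 hbb⟩
    have hnd : (b :: (boxes f).filter (fun x => beforeB f x b)).Nodup := by
      rw [List.nodup_cons]
      refine ⟨fun hx => before_irrefl f b (List.mem_filter.1 hx).2, (boxes_nodup f).filter _⟩
    have := (List.subperm_of_subset hnd hsub).length_le
    simp only [List.length_cons] at this
    omega
  intro b hb b' hb'
  rw [← boxes_congr h] at hb hb'
  constructor
  · intro hlt
    by_contra hn
    have hne : b ≠ b' := by rintro rfl; omega
    rcases before_total f b b' hne with h1 | h1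
    · exact hn h1
    · have := key b' hb' b hb h1; omega
  · exact key b hb b' hb'

theorem std_perm {U : Filling} (hU : IsStandardF U) : ((boxes U).map (entryAt U)).Perm (List.range' 1 (nBoxes U)) := by
  rw [← flatten_eq]; exact hU

theorem std_inj {U : Filling} (hU : IsStandardF U) (b b' : ℕ × ℕ) (hb : b ∈ boxes U) (hb' : b' ∈ boxes U)
    (h : entryAt U b = entryAt U b') : b = b' := by
  have hnd : ((boxes U).map (entryAt U)).Nodup := (std_perm hU).nodup_iff.2 List.nodup_range'
  exact List.inj_on_of_nodup_map hnd hb hb' h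

theorem std_range {U : Filling} (hU : IsStandardF U) (b : ℕ × ℕ) (hb : b ∈ boxes U) : 1 ≤ entryAt U b ∧ entryAt U b ≤ nBoxes U := by
  have := (std_perm hU).mem_iff.1 (List.mem_map_of_mem hb)
  rw [List.mem_range'_1] at this
  omega

theorem std_surj {U : Filling} (hU : IsStandardF U) (x : ℕ) (h1 : 1 ≤ x) (h2 : x ≤ nBoxes U) : ∃ b ∈ boxes U, entryAt U b = x := by
  have := (std_perm hU).mem_iff.2 (List.mem_range'_1.2 ⟨h1, (by omega : x < 1 + nBoxes U)⟩)
  simpa using this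

theorem std_of_star {U : Filling} (hU : IsStandardF U) (f : Filling) (h : f.map List.length = U.map List.length)
    (hs : Star f U) : stdFill f = U := by
  conv_rhs => rw [fill_eq U]
  unfold stdFill
  rw [boxes_congr h, len_eq h]
  apply List.map_congr_left
  intro r hr
  rw [getD_len h]
  apply List.map_congr_left
  intro j hj
  have hb : (r, j) ∈ boxes U := by
    rw [mem_boxes_s1]; exact ⟨by simpa using hr, by simpa using hj⟩
  have h1 : (boxes U).filter (fun b' => beforeB f b' (r, j)) =
      (boxes U).filter ((fun x => decide (x < entryAt U (r, j))) ∘ entryAt U) := by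
    apply List.filter_congr
    intro b' hb'
    rw [Bool.eq_iff_iff, ← hs b' hb' _ hb]
    simp
  have h2 := congrArg List.length (List.filter_map (f := entryAt U)
    (p := fun x => decide (x < entryAt U (r, j))) (l := boxes U))
  rw [List.length_map] at h2
  rw [h1, ← h2, ((std_perm hU).filter _).length_eq]
  have hrg := std_range hU _ hb
  have h3 : (List.range' 1 (nBoxes U)).filter (fun x => decide (x < entryAt U (r, j))) =
      List.range' 1 (entryAt U (r, j) - 1) := by
    apply sorted_ext (List.Pairwise.filter _ List.pairwise_lt_range') List.pairwise_lt_range'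
    intro x
    simp only [List.mem_filter, List.mem_range'_1, decide_eq_true_eq]
    omega
  rw [h3, List.length_range']
  omega

def pos (U : Filling) (i : ℕ) : ℕ × ℕ :=
  (rowOf U i, (U.getD (rowOf U i) []).findIdx (fun x => x == i))

theorem pos_entry {U : Filling} (hU : IsStandardF U) (b : ℕ × ℕ) (hb : b ∈ boxes U) :
    pos U (entryAt U b) = b := by
  obtain ⟨r, j⟩ := b
  have hb' := (mem_boxes_s1 _ _).1 hb
  simp only at hb'
  obtain ⟨hr, hj⟩ := hb'
  have hg : U.getD r [] = U[r] := List.getD_eq_getElem _ _ hr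
  have hj' : j < U[r].length := by rw [← hg]; exact hj
  have he : entryAt U (r, j) = U[r][j] := by
    unfold entryAt; simp only [hg]; rw [List.getD_eq_getElem _ _ hj']
  have h1 : rowOf U (entryAt U (r, j)) = r := by
    unfold rowOf
    rw [List.findIdx_eq hr]
    constructor
    · rw [he]; simp
    · intro k hk
      rw [Bool.eq_false_iff]
      intro hc
      rw [List.contains_iff_mem, List.mem_iff_getElem] at hc
      obtain ⟨l, hl, hl'⟩ := hc
      have hk' : k < U.length := by omega
      have hgk : U.getD k [] = U[k] := List.getD_eq_getElem _ _ hk'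
      have hkb : (k, l) ∈ boxes U := by
        rw [mem_boxes_s1]; exact ⟨hk', by simp only [hgk]; exact hl⟩
      have hek : entryAt U (k, l) = entryAt U (r, j) := by
        rw [← hl']
        unfold entryAt; simp only [hgk]; rw [List.getD_eq_getElem _ _ hl]
      have := std_inj hU _ _ hkb hb hek
      simp only [Prod.mk.injEq] at this
      omega
  unfold pos
  rw [h1]
  congr 1
  simp only [hg]
  rw [List.findIdx_eq hj']
  constructor
  · rw [he]; simp
  · intro k hk
    rw [Bool.eq_false_iff]
    intro hc
    have hkl : k < U[r].length := by omega
    have hkb : (r, k) ∈ boxes U := by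
      rw [mem_boxes_s1]; exact ⟨hr, by simp only [hg]; exact hkl⟩
    have hek : entryAt U (r, k) = entryAt U (r, j) := by
      rw [← beq_iff_eq.1 hc]
      unfold entryAt; simp only [hg]; rw [List.getD_eq_getElem _ _ hkl]
    have := std_inj hU _ _ hkb hb hek
    simp only [Prod.mk.injEq] at this
    omega

theorem pos_spec {U : Filling} (hU : IsStandardF U) (x : ℕ) (h1 : 1 ≤ x) (h2 : x ≤ nBoxes U) :
    pos U x ∈ boxes U ∧ entryAt U (pos U x) = x := by
  obtain ⟨b, hb, rfl⟩ := std_surj hU x h1 h2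
  rw [pos_entry hU b hb]; exact ⟨hb, rfl⟩

theorem typeWord_star {A : Type*} [Inhabited A] (J : Sentence A) (f U : Filling)
    (h : f.map List.length = J.map List.length) (hf : f.map List.length = U.map List.length)
    (hU : IsStandardF U) (hs : Star f U) (v : ℕ) :
    typeWord J f v = ((List.range (nBoxes U)).filter
      (fun i => entryAt f (pos U (i+1)) == v)).map (fun i => colorOf J U (i+1)) := by
  rw [typeWord_eq J f h]
  have e1 : ((List.range (nBoxes U)).filter
      (fun i => entryAt f (pos U (i+1)) == v)).map (fun i => colorOf J U (i+1)) =
      (((List.range (nBoxes U)).map (fun i => pos U (i+1))).filter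
        (fun b => entryAt f b == v)).map (colorB J) := by
    rw [List.filter_map, List.map_map]; rfl
  rw [e1]
  congr 1
  have p1 : ((revBoxes f).filter (fun b => entryAt f b == v)).Pairwise
      (fun b b' => beforeB f b b' = true) := by
    refine ((revBoxes_pairwise f).filter _).imp_of_mem ?_
    intro a b ha hb hab
    rw [List.mem_filter, beq_iff_eq] at ha hb
    rw [beforeB_iff]
    exact Or.inr ⟨ha.2.trans hb.2.symm, hab⟩
  have p2 : (((List.range (nBoxes U)).map (fun i => pos U (i+1))).filter
        (fun b => entryAt f b == v)).Pairwise (fun b b' => beforeB f b b' = true) := by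
    apply List.Pairwise.filter
    rw [List.pairwise_map]
    refine List.pairwise_lt_range.imp_of_mem ?_
    intro a b ha hb hab
    rw [List.mem_range] at ha hb
    obtain ⟨a1, a2⟩ := pos_spec hU (a+1) (by omega) (by omega)
    obtain ⟨b1, b2⟩ := pos_spec hU (b+1) (by omega) (by omega)
    rw [← hs _ a1 _ b1, a2, b2]
    omega
  have nd : ∀ l : List (ℕ × ℕ), l.Pairwise (fun b b' => beforeB f b b' = true) → l.Nodup := by
    intro l hl
    refine hl.imp ?_
    rintro a b hab rfl
    exact before_irrefl f a hab
  refine List.Perm.eq_of_pairwise (fun a b _ _ h h' => absurd h' (before_asymm f _ _ h)) p1 p2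
    ((List.perm_ext_iff_of_nodup (nd _ p1) (nd _ p2)).2 ?_)
  intro b
  rw [List.mem_filter, List.mem_filter, mem_revBoxes, boxes_congr hf]
  refine and_congr ?_ Iff.rfl
  rw [List.mem_map]
  constructor
  · intro hb
    obtain ⟨r1, r2⟩ := std_range hU b hb
    refine ⟨entryAt U b - 1, by rw [List.mem_range]; omega, ?_⟩
    rw [Nat.sub_add_cancel r1, pos_entry hU b hb]
  · rintro ⟨i, hi, rfl⟩
    rw [List.mem_range] at hi
    exact (pos_spec hU (i+1) (by omega) (by omega)).1

theorem forward {A : Type*} [Inhabited A] (J : Sentence A)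
    (U : Filling) (hU : IsCIT J U) (hUstd : IsStandardF U) (B : Sentence A)
    (f : Filling) (hf : IsCIT J f) (hT : HasType J f B) (hs : stdFill f = U) :
    Refines (flattenWS B) (coA J U) := by
  have hfU : f.map List.length = U.map List.length := hf.1.trans hU.1.symm
  have hst := star_of_std f U hfU hs
  have hpos : ∀ b ∈ boxes U, 1 ≤ entryAt f b := by
    intro b hb
    rw [← boxes_congr hfU] at hb
    apply hf.2.2.2
    rw [flatten_eq]
    exact List.mem_map_of_mem hb
  have hlt : ∀ i j, i < j → j < nBoxes U →
      beforeB f (pos U (i+1)) (pos U (j+1)) = true := by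
    intro i j hij hj
    obtain ⟨a1, a2⟩ := pos_spec hUstd (i+1) (by omega) (by omega)
    obtain ⟨b1, b2⟩ := pos_spec hUstd (j+1) (by omega) (by omega)
    rw [← hst _ a1 _ b1, a2, b2]
    omega
  have := of_g B (nBoxes U) (fun i => colorOf J U (i+1)) (fun i => entryAt f (pos U (i+1)))
    (fun i hi => hpos _ (pos_spec hUstd (i+1) (by omega) (by omega)).1)
    (by
      intro i j hij hj
      rcases Nat.lt_or_eq_of_le hij with h | rfl
      · have := hlt i j h hj
        rw [beforeB_iff] at this
        omega
      · exact le_rfl)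
    (by
      intro v hv
      rw [← hT v hv, typeWord_star J f U hf.1 hfU hUstd hst])
  rw [refines_coA]
  refine ⟨this.1, ?_⟩
  intro d hd hdn hrow
  apply this.2 d hd hdn
  have h1 := hlt (d-1) d (by omega) hdn
  simp only [Nat.sub_add_cancel hd] at h1 ⊢
  rw [beforeB_iff] at h1
  change rowOf U d < rowOf U (d+1) at hrow
  simp only [show (pos U d).1 = rowOf U d from rfl, show (pos U (d+1)).1 = rowOf U (d+1) from rfl] at h1
  omega

theorem entry_map (U : Filling) (h : ℕ → ℕ) (b : ℕ × ℕ) (hb : b ∈ boxes U) :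
    entryAt (U.map (List.map h)) b = h (entryAt U b) := by
  obtain ⟨h1, h2⟩ := (mem_boxes_s1 _ _).1 hb
  rw [List.getD_eq_getElem _ _ h1] at h2
  unfold entryAt
  have h3 : (U.map (List.map h)).getD b.1 [] = U[b.1].map h := by
    rw [List.getD_eq_getElem _ _ (by simpa using h1)]; simp
  rw [h3, List.getD_eq_getElem U _ h1, List.getD_eq_getElem _ _ h2,
    List.getD_eq_getElem _ _ (by simpa using h2)]
  simp

theorem backward {A : Type*} [Inhabited A] (J : Sentence A)
    (U : Filling) (hU : IsCIT J U) (hUstd : IsStandardF U) (B : Sentence A)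
    (hR : Refines (flattenWS B) (coA J U)) :
    ∃ f : Filling, IsCIT J f ∧ HasType J f B ∧ stdFill f = U := by
  rw [refines_coA] at hR
  obtain ⟨hR1, hR2⟩ := hR
  obtain ⟨g, g1, g2, g3, g4⟩ := exists_g B (nBoxes U) (fun i => colorOf J U (i+1)) hR1
  have hrows : ∀ x y, 1 ≤ x → x ≤ y → y ≤ nBoxes U → g (x-1) = g (y-1) →
      rowOf U y ≤ rowOf U x := by
    intro x y hx hxy
    induction y, hxy using Nat.le_induction with
    | base => intros; exact le_rfl
    | succ y hxy ih =>
      intro hy hg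
      have e1 := g2 (x-1) (y-1) (by omega) (by omega)
      have e2 := g2 (y-1) y (by omega) (by omega)
      simp only [Nat.add_sub_cancel] at hg
      have e3 := ih (by omega) (by omega)
      by_contra hlt
      have := g4 y (by omega) (by omega) (hR2 y (by omega) (by omega) (by omega))
      omega
  have hflat : ∀ x ∈ U.flatten, 1 ≤ x ∧ x ≤ nBoxes U := by
    intro x hx
    rw [flatten_eq, List.mem_map] at hx
    obtain ⟨b, hb, rfl⟩ := hx
    exact std_range hUstd b hb
  have hrowle : ∀ r j j', j ≤ j' → (r, j') ∈ boxes U → entryAt U (r, j) ≤ entryAt U (r, j') := by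
    intro r j j' hjj hb
    obtain ⟨h1, h2⟩ := (mem_boxes_s1 _ _).1 hb
    simp only at h1 h2
    rw [List.getD_eq_getElem _ _ h1] at h2
    have hc := hU.2.1 U[r] (List.getElem_mem h1)
    have hp := List.isChain_iff_pairwise.1 hc
    unfold entryAt
    simp only
    rw [List.getD_eq_getElem U _ h1, List.getD_eq_getElem _ _ h2,
      List.getD_eq_getElem _ _ (by omega : j < U[r].length)]
    rcases Nat.lt_or_eq_of_le hjj with h | rfl
    · exact List.pairwise_iff_getElem.1 hp _ _ _ _ h
    · exact le_rfl
  let f : Filling := U.map (List.map (fun x => g (x-1)))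
  have hfU : f.map List.length = U.map List.length := by
    simp [f, Function.comp_def]
  have hfJ : f.map List.length = J.map List.length := hfU.trans hU.1
  have hent : ∀ b ∈ boxes U, entryAt f b = g (entryAt U b - 1) := fun b hb =>
    entry_map U (fun x => g (x-1)) b hb
  have hst : Star f U := by
    have key : ∀ b ∈ boxes U, ∀ b' ∈ boxes U, entryAt U b < entryAt U b' →
        beforeB f b b' = true := by
      intro b hb b' hb' hlt
      rw [beforeB_iff, hent b hb, hent b' hb']
      have r1 := std_range hUstd b hb
      have r2 := std_range hUstd b' hb'
      have hm := g2 (entryAt U b - 1) (entryAt U b' - 1) (by omega) (by omega)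
      rcases Nat.lt_or_eq_of_le hm with h | h
      · exact Or.inl h
      · refine Or.inr ⟨h, ?_⟩
        have hr := hrows _ _ r1.1 hlt.le r2.2 h
        have q1 : rowOf U (entryAt U b) = b.1 := congrArg Prod.fst (pos_entry hUstd b hb)
        have q2 : rowOf U (entryAt U b') = b'.1 := congrArg Prod.fst (pos_entry hUstd b' hb')
        rw [q1, q2] at hr
        rcases Nat.lt_or_eq_of_le hr with h' | h'
        · exact Or.inl h'
        · refine Or.inr ⟨h'.symm, ?_⟩
          by_contra hge
          obtain ⟨r, j⟩ := b
          obtain ⟨r', j'⟩ := b'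
          simp only at h' hge
          subst h'
          have := hrowle r' j' j (by omega) hb
          omega
    intro b hb b' hb'
    refine ⟨key b hb b' hb', fun h => ?_⟩
    by_contra hge
    rcases Nat.lt_or_eq_of_le (not_lt.1 hge) with h' | h'
    · exact before_asymm f _ _ h (key b' hb' b hb h')
    · have := std_inj hUstd _ _ hb' hb h'
      subst this
      exact before_irrefl f _ h
  refine ⟨f, ⟨hfJ, ?_, ?_, ?_⟩, ?_, std_of_star hUstd f hfU hst⟩
  · intro row hrow
    obtain ⟨row', hr', rfl⟩ := List.mem_map.1 hrow
    have hp := List.isChain_iff_pairwise.1 (hU.2.1 row' hr')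
    apply List.isChain_iff_pairwise.2
    rw [List.pairwise_map]
    refine hp.imp_of_mem ?_
    intro a b ha hb hab
    have r1 := hflat a (List.mem_flatten.2 ⟨_, hr', ha⟩)
    have r2 := hflat b (List.mem_flatten.2 ⟨_, hr', hb⟩)
    exact g2 _ _ (by omega) (by omega)
  · have hp := List.isChain_iff_pairwise.1 hU.2.2.1
    apply List.isChain_iff_pairwise.2
    rw [List.pairwise_filterMap] at hp ⊢
    rw [List.pairwise_map]
    rw [List.pairwise_iff_getElem] at hp ⊢
    intro i j hi hj hij a ha b hb
    rw [List.head?_map, Option.map_eq_some_iff] at ha hb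
    obtain ⟨x, hx, rfl⟩ := ha
    obtain ⟨y, hy, rfl⟩ := hb
    have hxy := hp i j hi hj hij x hx y hy
    have aux : ∀ i (hi : i < U.length) x, U[i].head? = some x →
        (i, 0) ∈ boxes U ∧ entryAt U (i, 0) = x := by
      intro i hi x hx
      have hl : 0 < U[i].length := by
        rcases h : U[i] with _ | ⟨a, l⟩
        · rw [h] at hx; simp at hx
        · simp
      refine ⟨(mem_boxes_s1 _ _).2 ⟨hi, by simp only; rw [List.getD_eq_getElem U _ hi]; exact hl⟩, ?_⟩
      unfold entryAt
      simp only
      rw [List.getD_eq_getElem U _ hi, List.getD_eq_getElem _ _ hl]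
      rw [List.head?_eq_getElem?, List.getElem?_eq_getElem hl] at hx
      simpa using hx
    obtain ⟨bx, ex⟩ := aux i hi x hx
    obtain ⟨bY, ey⟩ := aux j hj y hy
    have r1 := std_range hUstd _ bx
    have r2 := std_range hUstd _ bY
    have q1 : rowOf U (entryAt U (i, 0)) = i := congrArg Prod.fst (pos_entry hUstd _ bx)
    have q2 : rowOf U (entryAt U (j, 0)) = j := congrArg Prod.fst (pos_entry hUstd _ bY)
    rw [ex] at r1 q1
    rw [ey] at r2 q2
    have hm := g2 (x - 1) (y - 1) (by omega) (by omega)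
    rcases Nat.lt_or_eq_of_le hm with h | h
    · exact h
    · have := hrows x y r1.1 hxy.le r2.2 h
      omega
  · intro x hx
    rw [flatten_eq, List.mem_map] at hx
    obtain ⟨b, hb, rfl⟩ := hx
    rw [boxes_congr hfU] at hb
    rw [hent b hb]
    have := std_range hUstd b hb
    exact g1 _ (by omega)
  · intro v hv
    rw [typeWord_star J f U hfJ hfU hUstd hst, ← g3 v hv]
    congr 1
    apply List.filter_congr
    intro i hi
    rw [List.mem_range] at hi
    obtain ⟨s1, s2⟩ := pos_spec hUstd (i+1) (by omega) (by omega)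
    rw [hent _ s1, s2, Nat.add_sub_cancel]

theorem statement1 {A : Type*} [Inhabited A] (J : Sentence A) (hJ : IsSentence J)
    (U : Filling) (hU : IsCIT J U) (hUstd : IsStandardF U) (B : Sentence A) :
    (∃ f : Filling, IsCIT J f ∧ HasType J f B ∧ stdFill f = U) ↔
      Refines (flattenWS B) (coA J U) := by
  exact
    ⟨fun ⟨f, hf, hT, hs⟩ => forward J U hU hUstd B f hf hT hs,
      fun h => backward J U hU hUstd B h⟩

end ColoredImm
end
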